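/- Let z₁, z₂, z₃ be nonzero complex numbers with z₁z₂z₃ = 1 and let n₁ ≥ n₂ ≥ n₃ ≥ 1 be integers. For j = 1, 2, 3 set A_j = ℂ[t^{±1}]/((t − z_j)^{n_j}) and let η_j ∈ A_j be the class of 1. Then for all nonnegative integers k₁, k₂, k₃ with k₁ + k₂ + k₃ ≥ n₂ + n₃ − 1, the class of (t − z₁)^{k₁}η₁ ⊗ (t − z₂)^{k₂}η₂ ⊗ (t − z₃)^{k₃}η₃ in the quotient (A₁ ⊗_ℂ A₂ ⊗_ℂ A₃)/H is zero. -/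

import Mathlib

open LaurentPolynomial TensorProduct

set_option synthInstance.maxHeartbeats 1000000
set_option maxHeartbeats 1000000
noncomputable section

abbrev LQuot (K : Type) [Field K] (p : LaurentPolynomial K) : Type :=
  LaurentPolynomial K ⧸ Ideal.span {p}

/-- The class of a Laurent polynomial in the quotient by `(p)`. -/
def clsOf (K : Type) [Field K] (p x : LaurentPolynomial K) : LQuot K p :=
  Ideal.Quotient.mk (Ideal.span {p}) x

abbrev Trip (K : Type) [Field K] (p q r : LaurentPolynomial K) : Type :=
  (LQuot K p ⊗[K] LQuot K q) ⊗[K] LQuot K r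

instance (K : Type) [Field K] (p q r : LaurentPolynomial K) : AddCommGroup (Trip K p q r) :=
  TensorProduct.addCommGroup

/-- The holonomy subspace: the `K`-span of the elements
`β₁ ⊗ β₂ ⊗ β₃ - tβ₁ ⊗ tβ₂ ⊗ tβ₃`. -/
def holSub (K : Type) [Field K] (p q r : LaurentPolynomial K) :
    Submodule K (Trip K p q r) :=
  Submodule.span K { x | ∃ (a : LQuot K p) (b : LQuot K q) (c : LQuot K r),
    x = (a ⊗ₜ[K] b) ⊗ₜ[K] c -
      (((T 1 : LaurentPolynomial K) • a) ⊗ₜ[K] ((T 1 : LaurentPolynomial K) • b)) ⊗ₜ[K]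
        ((T 1 : LaurentPolynomial K) • c) }

/-- The combinatorial core: a trilinear map `B`, invariant under the diagonal action of `t`,
kills the elements `(t - z₁)^k₁ a, (t - z₂)^k₂ b, (t - z₃)^k₃ c` of large total degree. -/
lemma aux_core {L M₁ M₂ M₃ Q : Type*} [CommRing L] [AddCommGroup M₁] [AddCommGroup M₂]
    [AddCommGroup M₃] [AddCommGroup Q] [Module L M₁] [Module L M₂] [Module L M₃] [Module ℂ Q]
    (t c₁ c₂ c₃ : L) (z₁ z₂ z₃ : ℂ) (hz : z₁ * z₂ * z₃ = 1)
    (B : M₁ → M₂ → M₃ → Q)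
    (s₁ : ∀ a a' b c, B (a - a') b c = B a b c - B a' b c)
    (s₂ : ∀ a b b' c, B a (b - b') c = B a b c - B a b' c)
    (s₃ : ∀ a b c c', B a b (c - c') = B a b c - B a b c')
    (m₁ : ∀ a b c, B (c₁ • a) b c = z₁ • B a b c)
    (m₂ : ∀ a b c, B a (c₂ • b) c = z₂ • B a b c)
    (m₃ : ∀ a b c, B a b (c₃ • c) = z₃ • B a b c)
    (hB : ∀ a b c, B (t • a) (t • b) (t • c) = B a b c)
    (n₂ n₃ : ℕ) (h₂ : ∀ b : M₂, (t - c₂) ^ n₂ • b = 0) (h₃ : ∀ c : M₃, (t - c₃) ^ n₃ • c = 0)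
    (hn₃ : 1 ≤ n₃) (k₁ : ℕ) : ∀ (k₂ k₃ : ℕ), n₂ + n₃ - 1 ≤ k₁ + k₂ + k₃ → ∀ a b c,
    B ((t - c₁) ^ k₁ • a) ((t - c₂) ^ k₂ • b) ((t - c₃) ^ k₃ • c) = 0 := by
  have o₂ : ∀ a c, B a 0 c = 0 := by
    intro a c
    have := s₂ a 0 0 c
    simpa using this
  have o₃ : ∀ a b, B a b 0 = 0 := by
    intro a b
    have := s₃ a b 0 0
    simpa using this
  have hx : ∀ a b c, B ((t - c₁) • a) b c =
      - (z₁ • (B (t • a) ((t - c₂) • b) (t • c) + z₂ • B (t • a) b ((t - c₃) • c))) := by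
    intro a b c
    rw [sub_smul, s₁, m₁, sub_smul, s₂, m₂, sub_smul, s₃, m₃, hB]
    have : B (t • a) b c = (z₁ * z₂ * z₃) • B (t • a) b c := by rw [hz, one_smul]
    linear_combination (norm := module) this
  induction k₁ with
  | zero =>
    intro k₂ k₃ hk a b c
    rcases le_or_gt n₂ k₂ with h | h
    · obtain ⟨d, rfl⟩ := Nat.exists_eq_add_of_le h
      rw [pow_add, mul_smul _ _ b, h₂, o₂]
    · obtain ⟨d, rfl⟩ := Nat.exists_eq_add_of_le (by omega : n₃ ≤ k₃)
      rw [pow_add _ n₃ d, mul_smul _ _ c, h₃, o₃]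
  | succ k ih =>
    intro k₂ k₃ hk a b c
    have e₁ := ih (k₂ + 1) k₃ (by omega) (t • a) b (t • c)
    have e₂ := ih k₂ (k₃ + 1) (by omega) (t • a) b c
    rw [smul_comm _ t a, smul_comm _ t c, pow_succ' _ k₂, mul_smul _ _ b] at e₁
    rw [smul_comm _ t a, pow_succ' _ k₃, mul_smul _ _ c] at e₂
    rw [pow_succ' _ k, mul_smul _ _ a, hx, e₁, e₂]
    simp

theorem stmt10 (z₁ z₂ z₃ : ℂ) (hz₁ : z₁ ≠ 0) (hz₂ : z₂ ≠ 0) (hz₃ : z₃ ≠ 0)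
    (hprod : z₁ * z₂ * z₃ = 1) (n₁ n₂ n₃ : ℕ) (hn₃ : 1 ≤ n₃) (hn₂₃ : n₃ ≤ n₂)
    (hn₁₂ : n₂ ≤ n₁) (k₁ k₂ k₃ : ℕ) (hk : n₂ + n₃ - 1 ≤ k₁ + k₂ + k₃) :
    (Submodule.Quotient.mk
        ((clsOf ℂ ((T 1 - C z₁) ^ n₁) ((T 1 - C z₁) ^ k₁) ⊗ₜ[ℂ]
            clsOf ℂ ((T 1 - C z₂) ^ n₂) ((T 1 - C z₂) ^ k₂)) ⊗ₜ[ℂ]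
          clsOf ℂ ((T 1 - C z₃) ^ n₃) ((T 1 - C z₃) ^ k₃)) :
      Trip ℂ ((T 1 - C z₁) ^ n₁) ((T 1 - C z₂) ^ n₂) ((T 1 - C z₃) ^ n₃) ⧸
        holSub ℂ ((T 1 - C z₁) ^ n₁) ((T 1 - C z₂) ^ n₂) ((T 1 - C z₃) ^ n₃)) = 0 := by
  have hzero : ∀ (p : LaurentPolynomial ℂ) (a : LQuot ℂ p), p • a = 0 := by
    intro p a
    obtain ⟨x, rfl⟩ := Submodule.Quotient.mk_surjective _ a
    rw [← Submodule.Quotient.mk_smul, Submodule.Quotient.mk_eq_zero, smul_eq_mul]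
    exact Ideal.mul_mem_right _ _ (Ideal.subset_span rfl)
  have hC : ∀ (p : LaurentPolynomial ℂ) (z : ℂ) (a : LQuot ℂ p),
      (C z : LaurentPolynomial ℂ) • a = z • a := by
    intro p z a
    obtain ⟨x, rfl⟩ := Submodule.Quotient.mk_surjective _ a
    rw [← Submodule.Quotient.mk_smul, ← Submodule.Quotient.mk_smul, smul_eq_mul,
      LaurentPolynomial.smul_eq_C_mul]
  have hcls : ∀ (p x : LaurentPolynomial ℂ), clsOf ℂ p x = x • clsOf ℂ p 1 := by
    intro p x
    change _ = Submodule.Quotient.mk (x • 1)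
    rw [smul_eq_mul, mul_one]
    rfl
  rw [hcls _ ((T 1 - C z₁) ^ k₁), hcls _ ((T 1 - C z₂) ^ k₂), hcls _ ((T 1 - C z₃) ^ k₃)]
  refine aux_core (T 1 : LaurentPolynomial ℂ) (C z₁) (C z₂) (C z₃) z₁ z₂ z₃ hprod
    (fun a b c => (Submodule.Quotient.mk ((a ⊗ₜ[ℂ] b) ⊗ₜ[ℂ] c) :
      Trip ℂ ((T 1 - C z₁) ^ n₁) ((T 1 - C z₂) ^ n₂) ((T 1 - C z₃) ^ n₃) ⧸
        holSub ℂ ((T 1 - C z₁) ^ n₁) ((T 1 - C z₂) ^ n₂) ((T 1 - C z₃) ^ n₃)))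
    ?_ ?_ ?_ ?_ ?_ ?_ ?_ n₂ n₃ (hzero _) (hzero _) hn₃ k₁ k₂ k₃ hk _ _ _
  · intro a a' b c
    rw [← Submodule.Quotient.mk_sub, TensorProduct.sub_tmul, TensorProduct.sub_tmul]
  · intro a b b' c
    rw [← Submodule.Quotient.mk_sub, TensorProduct.tmul_sub, TensorProduct.sub_tmul]
  · intro a b c c'
    rw [← Submodule.Quotient.mk_sub, TensorProduct.tmul_sub]
  · intro a b c
    rw [← Submodule.Quotient.mk_smul, hC, ← TensorProduct.smul_tmul', ← TensorProduct.smul_tmul']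
  · intro a b c
    rw [← Submodule.Quotient.mk_smul, hC, TensorProduct.tmul_smul, ← TensorProduct.smul_tmul']
  · intro a b c
    rw [← Submodule.Quotient.mk_smul, hC, TensorProduct.tmul_smul]
  · intro a b c
    symm
    rw [Submodule.Quotient.eq]
    exact Submodule.subset_span ⟨a, b, c, rfl⟩
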